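/- Let k ≥ 1 be an integer and ε, α ≥ 0 reals. Let f : Finset E → ℝ be normalized, non-negative, monotone, submodular, let O be a finset with |O| ≤ k and f(O) = OPT ≥ 0, and let S be a finset with f(S) ≤ α·OPT. Define G := {o ∈ O : f(o|S) ≥ (1+ε)/2 · OPT/k}. Then f(G) ≥ (1 − α − (1+ε)/2) · OPT. -/

import Mathlib

open Finset

/-!
Split `O` into the good part `G` and the bad part `B`, whose elements have marginal gain below the
threshold `τ` with respect to `S`. Submodularity and non-negativity give
`f (S ∪ O) ≤ f (S ∪ B) + f G ≤ f S + ∑ b ∈ B, f(b|S) + f G`, and the sum is at most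
`|B| * τ ≤ k * τ`, a fixed fraction of `f O`. Monotonicity then turns `f (S ∪ O)` into `f O`.
-/

section Marginal

variable {E R : Type*} [DecidableEq E]

/-- The marginal gain `f(e|S)` of an element `e` with respect to a set `S`; it is zero when
`e ∈ S`. -/
def marginal [Sub R] (f : Finset E → R) (S : Finset E) (e : E) : R :=
  f (insert e S) - f S

/-- Submodularity of a set function, in its diminishing-returns form: the marginal gain of a new
element decreases as the set grows. -/
def IsSubmodular [Sub R] [LE R] (f : Finset E → R) : Prop :=
  ∀ ⦃X Y : Finset E⦄, X ⊆ Y → ∀ ⦃e : E⦄, e ∉ Y → marginal f Y e ≤ marginal f X e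

lemma marginal_of_mem [AddGroup R] {f : Finset E → R} {S : Finset E} {e : E} (he : e ∈ S) :
    marginal f S e = 0 := by
  rw [marginal, insert_eq_of_mem he, sub_self]

lemma marginal_add_self [AddGroup R] (f : Finset E → R) (S : Finset E) (e : E) :
    marginal f S e + f S = f (insert e S) :=
  sub_add_cancel _ _

namespace IsSubmodular

lemma marginal_le_marginal [AddGroup R] [Preorder R] {f : Finset E → R} (hf : IsSubmodular f)
    {X Y : Finset E} (hXY : X ⊆ Y) {e : E} (he : e ∈ Y → e ∈ X) :
    marginal f Y e ≤ marginal f X e := by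
  by_cases heY : e ∈ Y
  · rw [marginal_of_mem heY, marginal_of_mem (he heY)]
  · exact hf hXY heY

section Preorder

variable [AddCommGroup R] [Preorder R] [IsOrderedAddMonoid R] {f : Finset E → R}

lemma union_sub_le_union_sub (hf : IsSubmodular f) {X Y T : Finset E} (hXY : X ⊆ Y)
    (hT : Y ∩ T ⊆ X) : f (Y ∪ T) - f Y ≤ f (X ∪ T) - f X := by
  induction T using Finset.induction_on with
  | empty => simp
  | insert e T _ ih =>
    have he : e ∈ Y ∪ T → e ∈ X ∪ T := by grind
    have hT' : Y ∩ T ⊆ X := (inter_subset_inter_left (subset_insert e T)).trans hT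
    rw [union_insert, union_insert, ← marginal_add_self f (Y ∪ T),
      ← marginal_add_self f (X ∪ T), add_sub_assoc, add_sub_assoc]
    exact add_le_add (hf.marginal_le_marginal (union_subset_union_left hXY) he) (ih hT')

lemma union_add_inter_le (hf : IsSubmodular f) (A B : Finset E) :
    f (A ∪ B) + f (A ∩ B) ≤ f A + f B := by
  have h : f (A ∪ B) - f A ≤ f B - f (A ∩ B) := by
    simpa only [union_eq_right.mpr (inter_subset_right (s₁ := A) (s₂ := B))] using
      hf.union_sub_le_union_sub inter_subset_left (Subset.refl (A ∩ B))
  rwa [sub_le_iff_le_add, sub_add_eq_add_sub, le_sub_iff_add_le, add_comm (f B)] at h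

lemma union_le_add (hf : IsSubmodular f) (hnonneg : ∀ X, 0 ≤ f X) (A B : Finset E) :
    f (A ∪ B) ≤ f A + f B :=
  (le_add_of_nonneg_right (hnonneg (A ∩ B))).trans (hf.union_add_inter_le A B)

lemma union_le_add_sum_marginal (hf : IsSubmodular f) (S T : Finset E) :
    f (S ∪ T) ≤ f S + ∑ t ∈ T, marginal f S t := by
  induction T using Finset.induction_on with
  | empty => simp
  | insert e T heT ih =>
    have he : e ∈ S ∪ T → e ∈ S := fun h => (mem_union.mp h).resolve_right heT
    rw [union_insert, ← marginal_add_self f (S ∪ T), sum_insert heT, add_left_comm]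
    exact add_le_add (hf.marginal_le_marginal subset_union_left he) ih

end Preorder

lemma union_le_add_filter_add_card_nsmul [AddCommGroup R] [LinearOrder R] [IsOrderedAddMonoid R]
    {f : Finset E → R} (hf : IsSubmodular f) (hnonneg : ∀ X, 0 ≤ f X) (S O : Finset E) (τ : R) :
    f (S ∪ O) ≤ f S + f {o ∈ O | τ ≤ marginal f S o} + #{o ∈ O | ¬τ ≤ marginal f S o} • τ := by
  set G := {o ∈ O | τ ≤ marginal f S o}
  set B := {o ∈ O | ¬τ ≤ marginal f S o}
  have hBG : B ∪ G = O := by rw [union_comm, filter_union_filter_not_eq]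
  have hB : ∑ b ∈ B, marginal f S b ≤ #B • τ :=
    sum_le_card_nsmul _ _ _ fun b hb => (not_le.mp (mem_filter.mp hb).2).le
  calc f (S ∪ O) = f (S ∪ B ∪ G) := by rw [union_assoc, hBG]
    _ ≤ f (S ∪ B) + f G := hf.union_le_add hnonneg _ _
    _ ≤ f S + ∑ b ∈ B, marginal f S b + f G := by gcongr; exact hf.union_le_add_sum_marginal S B
    _ ≤ f S + #B • τ + f G := by gcongr
    _ = f S + f G + #B • τ := add_right_comm _ _ _

end IsSubmodular

end Marginal

theorem stmt_9_general {E R : Type*} [DecidableEq E] [Field R] [LinearOrder R]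
    [IsStrictOrderedRing R] {f : Finset E → R} (hf : IsSubmodular f) (hnonneg : ∀ X, 0 ≤ f X)
    {c k : R} (hc : 0 ≤ c) (hk : 0 < k) {O : Finset E} (hO : (#O : R) ≤ k) (S : Finset E) :
    f (S ∪ O) - f S - c * f O ≤ f {o ∈ O | c * f O / k ≤ marginal f S o} := by
  set τ := c * f O / k
  have hτ : 0 ≤ τ := div_nonneg (mul_nonneg hc (hnonneg O)) hk.le
  have hbad : #{o ∈ O | ¬τ ≤ marginal f S o} • τ ≤ c * f O :=
    calc #{o ∈ O | ¬τ ≤ marginal f S o} • τ ≤ #O • τ := by gcongr; exact filter_subset _ _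
      _ = #O * τ := nsmul_eq_mul _ _
      _ ≤ k * τ := by gcongr
      _ = c * f O := mul_div_cancel₀ _ hk.ne'
  linarith [hf.union_le_add_filter_add_card_nsmul hnonneg S O τ]

/-- The set `G` of "good" optimum elements has large value. -/
theorem stmt_9 {E : Type*} [DecidableEq E]
    (k : ℕ) (hk : 1 ≤ k) (ε α : ℝ) (hε : 0 ≤ ε) (hα : 0 ≤ α)
    (f : Finset E → ℝ)
    (hnorm : f ∅ = 0)
    (hnonneg : ∀ X : Finset E, 0 ≤ f X)
    (hmono : ∀ X Y : Finset E, X ⊆ Y → f X ≤ f Y)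
    (hsubmod : ∀ X Y : Finset E, X ⊆ Y → ∀ e ∉ Y,
      f (insert e Y) - f Y ≤ f (insert e X) - f X)
    (O : Finset E) (OPT : ℝ) (hOcard : O.card ≤ k) (hOPT : f O = OPT) (hOPT0 : 0 ≤ OPT)
    (S : Finset E) (hS : f S ≤ α * OPT) :
    f (O.filter fun o => (1 + ε) / 2 * OPT / k ≤ f (insert o S) - f S) ≥
      (1 - α - (1 + ε) / 2) * OPT := by
  subst hOPT
  have hunion : f O ≤ f (S ∪ O) := hmono _ _ subset_union_right
  refine le_trans ?_ (stmt_9_general (c := (1 + ε) / 2) hsubmod hnonneg (by positivity)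
    (Nat.cast_pos.mpr hk) (Nat.cast_le.mpr hOcard) S)
  linarith
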